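/- Let K ≥ 1, α > 0, and take α_k = α/√K for all 1 ≤ k ≤ K. Define weights w_k = ∑_{j=k}^{K} α_j β₁^{j−k} and probabilities p_k = w_k / ∑_{t=1}^{K} w_t. Then ∑_{k=1}^{K} p_k·E[F(x^(k))] − F* ≤ (1/(2α√K(1−β₁)))·( n·D∞²·G∞ + α²·G₁/((1−β₁)²·√(1−β₂)) + α³·L·τ²·s/(√K·(1−β₂)) ). -/

import Mathlib

open MeasureTheory Finset

/-!
In each coordinate, clamping to the box only brings the iterate closer to a comparator `z`, so
`√v̂ₖ (xₖ₊₁ - z)²` decreases up to second-order terms and the momentum term `αₖ mₖ (xₖ - z)`, and it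
telescopes because `√v̂ₖ` is monotone. With the weights `wₖ = ∑_{j ≥ k} αⱼ β₁^(j-k)`, summation by
parts trades the momenta `mₖ` for the gradients `gₖ`, which on average are the gradients of `F` at
the stale points `x̂ₖ`. Convexity and smoothness give
`F xₖ - F z ≤ ⟪∇F x̂ₖ, xₖ - z⟫ + L/2 ‖xₖ - x̂ₖ‖²`, and the staleness error is controlled by the
sparsity of the gradients: `mₖ²/v̂ₖ` is at most `1/(1-β₂)` times the moving average of the
indicators of `gₖ ≠ 0`, hence `E ‖xₖ₊₁ - xₖ‖² ≤ αₖ² s/(1-β₂)`.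
-/

lemma abs_min_max_sub_le {R : Type*} [AddCommGroup R] [LinearOrder R] [IsOrderedAddMonoid R]
    {a b y z : R} (hz : z ∈ Set.Icc a b) : |min (max y a) b - z| ≤ |y - z| := by
  have hz' : z = min (max z a) b := by rw [max_eq_left hz.1, min_eq_left hz.2]
  calc |min (max y a) b - z| = |min (max y a) b - min (max z a) b| := by rw [← hz']
    _ ≤ max |max y a - max z a| |b - b| := abs_min_sub_min_le_max ..
    _ = |max y a - max z a| := by simp
    _ ≤ |y - z| := abs_max_sub_max_le_abs ..

lemma sum_Icc_le_sub_of_le_sub {R : Type*} [AddCommGroup R] [PartialOrder R]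
    [IsOrderedAddMonoid R] {f Φ : ℕ → R} {K : ℕ}
    (h : ∀ k < K, f (k + 1) ≤ Φ k - Φ (k + 1)) : ∑ k ∈ Icc 1 K, f k ≤ Φ 0 - Φ K := by
  induction K with
  | zero => simp
  | succ K ih =>
    rw [sum_Icc_succ_top (by lia)]
    calc ∑ k ∈ Icc 1 K, f k + f (K + 1) ≤ (Φ 0 - Φ K) + (Φ K - Φ (K + 1)) :=
          add_le_add (ih fun k hk ↦ h k (hk.trans K.lt_succ_self)) (h K K.lt_succ_self)
      _ = Φ 0 - Φ (K + 1) := sub_add_sub_cancel ..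

lemma sum_Icc_sub_le_sum_Icc {R : Type*} [AddCommMonoid R] [PartialOrder R] [IsOrderedAddMonoid R]
    {f h : ℕ → R} {K : ℕ} (l : ℕ) (hh : ∀ j ∈ Icc 1 K, 0 ≤ h j)
    (hzero : ∀ k ∈ Icc 1 K, k ≤ l → f k ≤ 0) (hle : ∀ k ∈ Icc 1 K, l < k → f k ≤ h (k - l)) :
    ∑ k ∈ Icc 1 K, f k ≤ ∑ j ∈ Icc 1 K, h j := by
  calc ∑ k ∈ Icc 1 K, f k ≤ ∑ k ∈ Icc 1 K with l < k, h (k - l) := by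
        rw [sum_filter]
        refine sum_le_sum fun k hk ↦ ?_
        split_ifs with hlk
        · exact hle k hk hlk
        · exact hzero k hk (not_lt.1 hlk)
    _ = ∑ j ∈ ({k ∈ Icc 1 K | l < k}).image (· - l), h j := by
        refine (sum_image fun k hk k' hk' hkk' ↦ ?_).symm
        simp only [coe_filter, Set.mem_ofPred_eq] at hk hk' hkk'
        lia
    _ ≤ ∑ j ∈ Icc 1 K, h j := by
        refine sum_le_sum_of_subset_of_nonneg (fun j hj ↦ ?_) fun j hj _ ↦ hh j hj
        simp only [mem_image, mem_filter, mem_Icc] at hj ⊢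
        lia

lemma sum_div_sum_mul_sub_le {κ : Type*} {t : Finset κ} {w f : κ → ℝ} {c A B : ℝ} (hA : 0 < A)
    (hAw : A ≤ ∑ k ∈ t, w k) (hB : 0 ≤ B) (h : ∑ k ∈ t, w k * (f k - c) ≤ B) :
    (∑ k ∈ t, w k / (∑ j ∈ t, w j) * f k) - c ≤ B / A := by
  have hW : 0 < ∑ k ∈ t, w k := hA.trans_le hAw
  calc (∑ k ∈ t, w k / (∑ j ∈ t, w j) * f k) - c
      = (∑ k ∈ t, w k * (f k - c)) / ∑ k ∈ t, w k := by
        simp only [mul_sub, sum_sub_distrib, ← sum_mul, div_mul_eq_mul_div, ← sum_div]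
        field_simp
    _ ≤ B / A := by gcongr

section ExpAvg

/-- The bias-uncorrected exponential moving average of `f 1, f 2, …` with decay rate `β`, started
at `0`; the entry `f 0` is ignored. It yields the first and second AMSGrad moments. -/
def expAvg (β : ℝ) (f : ℕ → ℝ) : ℕ → ℝ
  | 0 => 0
  | k + 1 => β * expAvg β f k + (1 - β) * f (k + 1)

variable {β : ℝ} {f h : ℕ → ℝ}

lemma eq_expAvg {m : ℕ → ℝ} (h0 : m 0 = 0)
    (hsucc : ∀ k, m (k + 1) = β * m k + (1 - β) * f (k + 1)) : m = expAvg β f := by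
  funext k
  induction k with
  | zero => exact h0
  | succ k ih => rw [hsucc, ih, expAvg]

lemma expAvg_mono (hβ₀ : 0 ≤ β) (hβ₁ : β ≤ 1) {k : ℕ} (hfh : ∀ j ∈ Icc 1 k, f j ≤ h j) :
    expAvg β f k ≤ expAvg β h k := by
  induction k with
  | zero => exact le_rfl
  | succ k ih =>
    have hlast := hfh (k + 1) (by simp)
    have hprev := ih fun j hj ↦ hfh j (Icc_subset_Icc_right k.le_succ hj)
    simp only [expAvg]
    gcongr

lemma expAvg_const_mul (c : ℝ) (k : ℕ) : expAvg β (fun j ↦ c * f j) k = c * expAvg β f k := by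
  induction k with
  | zero => simp [expAvg]
  | succ k ih => simp only [expAvg, ih]; ring

lemma expAvg_finsetSum {ι : Type*} (s : Finset ι) (f : ι → ℕ → ℝ) (k : ℕ) :
    expAvg β (fun j ↦ ∑ i ∈ s, f i j) k = ∑ i ∈ s, expAvg β (f i) k := by
  induction k with
  | zero => simp [expAvg]
  | succ k ih => simp only [expAvg, ih, sum_add_distrib, mul_sum]

lemma expAvg_nonneg (hβ₀ : 0 ≤ β) (hβ₁ : β ≤ 1) {k : ℕ} (hf : ∀ j ∈ Icc 1 k, 0 ≤ f j) :
    0 ≤ expAvg β f k := by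
  have hzero : expAvg β (fun _ ↦ 0) k = 0 := by simpa using expAvg_const_mul (f := fun _ ↦ 0) 0 k
  exact hzero.symm.trans_le (expAvg_mono hβ₀ hβ₁ hf)

lemma expAvg_le_const (hβ₀ : 0 ≤ β) (hβ₁ : β ≤ 1) {C : ℝ} (hC : 0 ≤ C) {k : ℕ}
    (hf : ∀ j ∈ Icc 1 k, f j ≤ C) : expAvg β f k ≤ C := by
  induction k with
  | zero => exact hC
  | succ k ih =>
    have hlast := hf (k + 1) (by simp)
    have hprev := ih fun j hj ↦ hf j (Icc_subset_Icc_right k.le_succ hj)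
    calc β * expAvg β f k + (1 - β) * f (k + 1) ≤ β * C + (1 - β) * C := by gcongr
      _ = C := by ring

lemma abs_expAvg_le (hβ₀ : 0 ≤ β) (hβ₁ : β ≤ 1) (f : ℕ → ℝ) (k : ℕ) :
    |expAvg β f k| ≤ expAvg β (fun j ↦ |f j|) k := by
  have hneg : expAvg β (fun j ↦ -f j) k = -expAvg β f k := by
    simpa using expAvg_const_mul (f := f) (-1) k
  rw [abs_le', ← hneg]
  exact ⟨expAvg_mono hβ₀ hβ₁ fun j _ ↦ le_abs_self _,
    expAvg_mono hβ₀ hβ₁ fun j _ ↦ neg_le_abs _⟩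

lemma sq_expAvg_le (hβ₀ : 0 ≤ β) (hβ₁ : β ≤ 1) (f : ℕ → ℝ) (k : ℕ) :
    expAvg β f k ^ 2 ≤ expAvg β (fun j ↦ f j ^ 2) k := by
  induction k with
  | zero => simp [expAvg]
  | succ k ih =>
    have hconvex : (β * expAvg β f k + (1 - β) * f (k + 1)) ^ 2 ≤
        β * expAvg β f k ^ 2 + (1 - β) * f (k + 1) ^ 2 :=
      even_two.convexOn_pow.2 (Set.mem_univ _) (Set.mem_univ _) hβ₀ (by linarith) (by ring)
    simp only [expAvg]
    exact hconvex.trans (by gcongr)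

variable {Ω : Type*} [MeasurableSpace Ω] {P : Measure Ω} {f : ℕ → Ω → ℝ}

lemma integrable_expAvg (β : ℝ) (hf : ∀ k, 1 ≤ k → Integrable (f k) P) (k : ℕ) :
    Integrable (fun ω ↦ expAvg β (fun j ↦ f j ω) k) P := by
  induction k with
  | zero => exact integrable_zero Ω ℝ P
  | succ k ih => exact (ih.const_mul β).add ((hf (k + 1) (by simp)).const_mul (1 - β))

lemma integral_expAvg (β : ℝ) (hf : ∀ k, 1 ≤ k → Integrable (f k) P) (k : ℕ) :
    ∫ ω, expAvg β (fun j ↦ f j ω) k ∂P = expAvg β (fun j ↦ ∫ ω, f j ω ∂P) k := by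
  induction k with
  | zero => simp [expAvg]
  | succ k ih =>
    simp only [expAvg]
    rw [integral_add ((integrable_expAvg β hf k).const_mul β)
      ((hf (k + 1) (by simp)).const_mul (1 - β)), integral_const_mul, integral_const_mul, ih]

lemma integral_sum_expAvg_le (hβ₀ : 0 ≤ β) (hβ₁ : β ≤ 1) {ι : Type*} (s : Finset ι)
    {f : ι → ℕ → Ω → ℝ} (hf : ∀ i ∈ s, ∀ k, 1 ≤ k → Integrable (f i k) P) {C : ℝ} (hC : 0 ≤ C)
    (hfC : ∀ k, 1 ≤ k → ∫ ω, ∑ i ∈ s, f i k ω ∂P ≤ C) (k : ℕ) :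
    ∫ ω, ∑ i ∈ s, expAvg β (fun j ↦ f i j ω) k ∂P ≤ C := by
  simp only [← expAvg_finsetSum]
  rw [integral_expAvg (f := fun j ω ↦ ∑ i ∈ s, f i j ω) β
    (fun j hj ↦ integrable_finsetSum s fun i hi ↦ hf i hi j hj)]
  exact expAvg_le_const hβ₀ hβ₁ hC fun j hj ↦ hfC j (mem_Icc.1 hj).1

lemma integral_sum_abs_expAvg_le (hβ₀ : 0 ≤ β) (hβ₁ : β ≤ 1) {ι : Type*} (s : Finset ι)
    {f : ι → ℕ → Ω → ℝ} (hf : ∀ i ∈ s, ∀ k, 1 ≤ k → Integrable (f i k) P) {C : ℝ} (hC : 0 ≤ C)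
    (hfC : ∀ k, 1 ≤ k → ∫ ω, ∑ i ∈ s, |f i k ω| ∂P ≤ C) (k : ℕ) :
    ∫ ω, ∑ i ∈ s, |expAvg β (fun j ↦ f i j ω) k| ∂P ≤ C := by
  have hfabs : ∀ i ∈ s, ∀ k, 1 ≤ k → Integrable (fun ω ↦ |f i k ω|) P :=
    fun i hi k hk ↦ (hf i hi k hk).abs
  calc ∫ ω, ∑ i ∈ s, |expAvg β (fun j ↦ f i j ω) k| ∂P
      ≤ ∫ ω, ∑ i ∈ s, expAvg β (fun j ↦ |f i j ω|) k ∂P :=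
        integral_mono
          (integrable_finsetSum s fun i hi ↦ (integrable_expAvg β (hf i hi) k).abs)
          (integrable_finsetSum s fun i hi ↦ integrable_expAvg β (hfabs i hi) k)
          fun ω ↦ sum_le_sum fun i _ ↦ abs_expAvg_le hβ₀ hβ₁ _ k
    _ ≤ C := integral_sum_expAvg_le hβ₀ hβ₁ s hfabs hC hfC k

end ExpAvg

section DiscountedSum

/-- The total step size `∑_{j=k}^K α_j β^(j-k)` with which the gradient taken at time `k` enters,
through momentum, the steps `k, …, K`: the weight `w_k` of the `k`-th iterate. -/
def discountedSum (β : ℝ) (α : ℕ → ℝ) (K k : ℕ) : ℝ :=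
  ∑ j ∈ Icc k K, α j * β ^ (j - k)

variable {β : ℝ} {α : ℕ → ℝ} {K k : ℕ}

lemma discountedSum_eq_zero (h : K < k) : discountedSum β α K k = 0 := by
  simp [discountedSum, Icc_eq_empty_of_lt h]

lemma discountedSum_eq_add (h : k ≤ K) :
    discountedSum β α K k = α k + β * discountedSum β α K (k + 1) := by
  rw [discountedSum, ← add_sum_Ioc_eq_sum_Icc h, Nat.sub_self, pow_zero, mul_one, discountedSum,
    mul_sum, ← Icc_add_one_left_eq_Ioc]
  congr 1
  refine sum_congr rfl fun j hj ↦ ?_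
  rw [show j - k = (j - (k + 1)) + 1 by have := (mem_Icc.1 hj).1; lia, pow_succ]
  ring

lemma discountedSum_nonneg (hβ : 0 ≤ β) (hα : ∀ j, 0 ≤ α j) : 0 ≤ discountedSum β α K k :=
  sum_nonneg fun j _ ↦ mul_nonneg (hα j) (pow_nonneg hβ _)

lemma le_discountedSum (hβ : 0 ≤ β) (hα : ∀ j, 0 ≤ α j) (h : k ≤ K) :
    α k ≤ discountedSum β α K k := by
  rw [discountedSum_eq_add h]
  exact le_add_of_nonneg_right (mul_nonneg hβ (discountedSum_nonneg hβ hα))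

lemma discountedSum_le {M : ℝ} (hβ : β ∈ Set.Ico 0 1) (hM : 0 ≤ M) (hα : ∀ j ∈ Icc k K, α j ≤ M) :
    discountedSum β α K k ≤ M / (1 - β) := by
  have hgeom : ∑ j ∈ Icc k K, β ^ (j - k) ≤ 1 / (1 - β) := by
    rw [← Ico_add_one_right_eq_Icc, sum_Ico_eq_sum_range, range_eq_Ico]
    simpa using geom_sum_Ico_le_of_lt_one (m := 0) (n := K + 1 - k) hβ.1 hβ.2
  calc discountedSum β α K k ≤ ∑ j ∈ Icc k K, M * β ^ (j - k) :=
        sum_le_sum fun j hj ↦ mul_le_mul_of_nonneg_right (hα j hj) (pow_nonneg hβ.1 _)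
    _ = M * ∑ j ∈ Icc k K, β ^ (j - k) := (mul_sum ..).symm
    _ ≤ M * (1 / (1 - β)) := by gcongr
    _ = M / (1 - β) := mul_one_div ..

/-- Summation by parts: this is how momentum is traded for plain gradients. -/
lemma one_sub_mul_discountedSum_mul (g : ℕ → ℝ) (h : k + 1 ≤ K) :
    (1 - β) * (discountedSum β α K (k + 1) * g (k + 1)) =
      α (k + 1) * expAvg β g (k + 1) + β * (discountedSum β α K (k + 2) * expAvg β g (k + 1) -
        discountedSum β α K (k + 1) * expAvg β g k) := by
  have hm : (1 - β) * g (k + 1) = expAvg β g (k + 1) - β * expAvg β g k := by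
    simp only [expAvg]; ring
  linear_combination discountedSum β α K (k + 1) * hm +
    expAvg β g (k + 1) * discountedSum_eq_add (β := β) (α := α) h

lemma sum_discountedSum_mul_sub_le (hβ : β ∈ Set.Ico 0 1) (hα₀ : ∀ j, 0 ≤ α j)
    (hα : AntitoneOn α (Set.Icc 1 K)) {d : ℕ → ℝ} {c : ℝ} (hc : 0 ≤ c) (hd : ∀ k ≤ 1, d k ≤ 0)
    (hdα : ∀ k, d (k + 1) ≤ α k ^ 2 * c) (l : ℕ) :
    ∑ k ∈ Icc 1 K, discountedSum β α K k * d (k - l) ≤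
      c / (1 - β) * ∑ k ∈ Icc 1 K, α k ^ 3 := by
  have hβ' : 0 ≤ 1 - β := sub_nonneg.2 hβ.2.le
  rw [mul_sum]
  refine sum_Icc_sub_le_sum_Icc (l + 1)
    (fun j _ ↦ mul_nonneg (div_nonneg hc hβ') (pow_nonneg (hα₀ j) 3)) (fun k _ hkl ↦ ?_)
    fun k hk hlk ↦ ?_
  · exact mul_nonpos_of_nonneg_of_nonpos (discountedSum_nonneg hβ.1 hα₀) (hd _ (by lia))
  · obtain ⟨j, rfl⟩ := Nat.exists_eq_add_of_lt hlk
    rw [show l + 1 + j + 1 - l = (j + 1) + 1 by lia, show l + 1 + j + 1 - (l + 1) = j + 1 by lia]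
    have hw : discountedSum β α K (l + 1 + j + 1) ≤ α (j + 1) / (1 - β) :=
      discountedSum_le hβ (hα₀ _) fun i hi ↦ hα (by grind) (by grind) (by grind)
    calc _ ≤ discountedSum β α K (l + 1 + j + 1) * (α (j + 1) ^ 2 * c) :=
          mul_le_mul_of_nonneg_left (hdα _) (discountedSum_nonneg hβ.1 hα₀)
      _ ≤ α (j + 1) / (1 - β) * (α (j + 1) ^ 2 * c) :=
          mul_le_mul_of_nonneg_right hw (mul_nonneg (sq_nonneg _) hc)
      _ = c / (1 - β) * α (j + 1) ^ 3 := by ring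

end DiscountedSum

section AMSGrad

/-- The AMSGrad preconditioner `√v̂ₖ`, where `v̂ₖ = max_{j ≤ k} vⱼ` is the running maximum of the
second moments `v`. -/
noncomputable def amsgradScale (β₂ : ℝ) (g : ℕ → ℝ) (k : ℕ) : ℝ :=
  √(partialSups (expAvg β₂ fun j ↦ g j ^ 2) k)

/-- The preconditioned direction `mₖ / √v̂ₖ` along which AMSGrad moves. -/
noncomputable def amsgradDirection (β₁ β₂ : ℝ) (g : ℕ → ℝ) (k : ℕ) : ℝ :=
  expAvg β₁ g k / amsgradScale β₂ g k

/-- `x` is a one-dimensional projected AMSGrad trajectory in `[a, b]` with step sizes `α` and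
gradients `g`. Time starts at `0` with a void step, so that `x 1 = x 0` is the initial point. -/
structure IsAMSGradTrajectory (β₁ β₂ : ℝ) (α : ℕ → ℝ) (a b : ℝ) (g x : ℕ → ℝ) : Prop where
  zero_mem : x 0 ∈ Set.Icc a b
  succ : ∀ k, x (k + 1) = min (max (x k - α k * amsgradDirection β₁ β₂ g k) a) b

/-- The potential whose decrease controls the `(k+1)`-st weighted regret term of an AMSGrad
trajectory against `z`: the preconditioned squared distance to `z`, shifted by its maximal value
`D ^ 2`, minus the boundary term left over when momentum is summed by parts. -/
noncomputable def regretPotential (β₁ β₂ : ℝ) (α : ℕ → ℝ) (K : ℕ) (D z : ℝ) (g x : ℕ → ℝ)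
    (k : ℕ) : ℝ :=
  amsgradScale β₂ g k * ((x (k + 1) - z) ^ 2 - D ^ 2) -
    2 * β₁ * discountedSum β₁ α K (k + 1) * expAvg β₁ g k * (x (k + 1) - z)

variable {β₁ β₂ : ℝ} {g : ℕ → ℝ} {k : ℕ}

lemma amsgradScale_zero (β₂ : ℝ) (g : ℕ → ℝ) : amsgradScale β₂ g 0 = 0 := by
  simp [amsgradScale, expAvg]

lemma amsgradScale_mono (β₂ : ℝ) (g : ℕ → ℝ) : Monotone (amsgradScale β₂ g) := fun _ _ h ↦
  Real.sqrt_le_sqrt ((partialSups _).monotone h)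

lemma amsgradScale_nonneg (β₂ : ℝ) (g : ℕ → ℝ) (k : ℕ) : 0 ≤ amsgradScale β₂ g k :=
  Real.sqrt_nonneg _

lemma sq_amsgradScale (β₂ : ℝ) (g : ℕ → ℝ) (k : ℕ) :
    amsgradScale β₂ g k ^ 2 = partialSups (expAvg β₂ fun j ↦ g j ^ 2) k :=
  Real.sq_sqrt (le_partialSups_of_le (expAvg β₂ fun j ↦ g j ^ 2) k.zero_le)

lemma amsgradScale_le (hβ₂ : β₂ ∈ Set.Ico 0 1) {G : ℝ} (hG : 0 ≤ G)
    (hg : ∀ j, 1 ≤ j → |g j| ≤ G) (k : ℕ) : amsgradScale β₂ g k ≤ G := by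
  refine (Real.sqrt_le_left hG).2 (partialSups_le _ _ _ fun j _ ↦ ?_)
  exact expAvg_le_const hβ₂.1 hβ₂.2.le (sq_nonneg G)
    fun i hi ↦ sq_le_sq.2 ((hg i (mem_Icc.1 hi).1).trans (le_abs_self G))

lemma one_sub_mul_sq_le_sq_amsgradScale (hβ₂ : β₂ ∈ Set.Ico 0 1) {j : ℕ} (hj : j ∈ Icc 1 k) :
    (1 - β₂) * g j ^ 2 ≤ amsgradScale β₂ g k ^ 2 := by
  obtain ⟨j, rfl⟩ := Nat.exists_eq_add_of_le' (mem_Icc.1 hj).1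
  calc (1 - β₂) * g (j + 1) ^ 2 ≤ expAvg β₂ (fun j ↦ g j ^ 2) (j + 1) :=
        le_add_of_nonneg_left
          (mul_nonneg hβ₂.1 (expAvg_nonneg hβ₂.1 hβ₂.2.le fun _ _ ↦ sq_nonneg _))
    _ ≤ amsgradScale β₂ g k ^ 2 := by
        rw [sq_amsgradScale]
        exact le_partialSups_of_le (expAvg β₂ fun j ↦ g j ^ 2) (mem_Icc.1 hj).2

lemma one_sub_mul_sq_expAvg_le (hβ₁ : β₁ ∈ Set.Ico 0 1) (hβ₂ : β₂ ∈ Set.Ico 0 1)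
    (g : ℕ → ℝ) (k : ℕ) :
    (1 - β₂) * expAvg β₁ g k ^ 2 ≤
      amsgradScale β₂ g k ^ 2 * expAvg β₁ (fun j ↦ if g j ≠ 0 then 1 else 0) k := by
  have hβ₂' : 0 ≤ 1 - β₂ := sub_nonneg.2 hβ₂.2.le
  calc (1 - β₂) * expAvg β₁ g k ^ 2 ≤ (1 - β₂) * expAvg β₁ (fun j ↦ g j ^ 2) k :=
        mul_le_mul_of_nonneg_left (sq_expAvg_le hβ₁.1 hβ₁.2.le g k) hβ₂'
    _ = expAvg β₁ (fun j ↦ (1 - β₂) * g j ^ 2) k := (expAvg_const_mul _ k).symm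
    _ ≤ expAvg β₁ (fun j ↦ amsgradScale β₂ g k ^ 2 * if g j ≠ 0 then 1 else 0) k := by
        refine expAvg_mono hβ₁.1 hβ₁.2.le fun j hj ↦ ?_
        split_ifs with hgj
        · rw [mul_one]
          exact one_sub_mul_sq_le_sq_amsgradScale hβ₂ hj
        · simp [not_not.1 hgj]
    _ = _ := expAvg_const_mul _ k

lemma amsgradScale_mul_amsgradDirection (hβ₁ : β₁ ∈ Set.Ico 0 1) (hβ₂ : β₂ ∈ Set.Ico 0 1)
    (g : ℕ → ℝ) (k : ℕ) : amsgradScale β₂ g k * amsgradDirection β₁ β₂ g k = expAvg β₁ g k := by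
  refine mul_div_cancel_of_imp' fun hzero ↦ ?_
  have hm := one_sub_mul_sq_expAvg_le hβ₁ hβ₂ g k
  rw [hzero, zero_pow two_ne_zero, zero_mul] at hm
  exact pow_eq_zero_iff two_ne_zero |>.1 <|
    le_antisymm (nonpos_of_mul_nonpos_right hm (sub_pos.2 hβ₂.2)) (sq_nonneg _)

lemma sq_amsgradDirection_le (hβ₁ : β₁ ∈ Set.Ico 0 1) (hβ₂ : β₂ ∈ Set.Ico 0 1)
    (g : ℕ → ℝ) (k : ℕ) :
    amsgradDirection β₁ β₂ g k ^ 2 ≤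
      expAvg β₁ (fun j ↦ if g j ≠ 0 then 1 else 0) k / (1 - β₂) := by
  have hβ₂' : 0 < 1 - β₂ := sub_pos.2 hβ₂.2
  rw [amsgradDirection, div_pow]
  refine div_le_of_le_mul₀ (sq_nonneg _) ?_ ?_
  · refine div_nonneg (expAvg_nonneg hβ₁.1 hβ₁.2.le fun j _ ↦ ?_) hβ₂'.le
    positivity
  · rw [div_mul_eq_mul_div, le_div_iff₀ hβ₂']
    linarith [one_sub_mul_sq_expAvg_le hβ₁ hβ₂ g k]

lemma abs_amsgradDirection_le (hβ₁ : β₁ ∈ Set.Ico 0 1) (hβ₂ : β₂ ∈ Set.Ico 0 1)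
    (g : ℕ → ℝ) (k : ℕ) : |amsgradDirection β₁ β₂ g k| ≤ 1 / √(1 - β₂) := by
  have hu : expAvg β₁ (fun j ↦ if g j ≠ 0 then 1 else 0) k ≤ 1 :=
    expAvg_le_const hβ₁.1 hβ₁.2.le zero_le_one fun j _ ↦ by split_ifs <;> simp
  calc |amsgradDirection β₁ β₂ g k| ≤ √(1 / (1 - β₂)) :=
        Real.abs_le_sqrt <| (sq_amsgradDirection_le hβ₁ hβ₂ g k).trans <|
          div_le_div_of_nonneg_right hu (sub_nonneg.2 hβ₂.2.le)
    _ = 1 / √(1 - β₂) := by rw [Real.sqrt_div zero_le_one, Real.sqrt_one]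

namespace IsAMSGradTrajectory

variable {α x : ℕ → ℝ} {a b z : ℝ}

lemma of_recursion {m v vhat : ℕ → ℝ} (hm0 : m 0 = 0) (hv0 : v 0 = 0) (hvhat0 : vhat 0 = 0)
    (hm : ∀ k, m (k + 1) = β₁ * m k + (1 - β₁) * g (k + 1))
    (hv : ∀ k, v (k + 1) = β₂ * v k + (1 - β₂) * g (k + 1) ^ 2)
    (hvhat : ∀ k, vhat (k + 1) = max (vhat k) (v (k + 1)))
    (hx1 : x 1 ∈ Set.Icc a b) (hx0 : x 0 = x 1)
    (hupd : ∀ k, 1 ≤ k → x (k + 1) = min (max (x k - α k * (m k / √(vhat k))) a) b) :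
    IsAMSGradTrajectory β₁ β₂ α a b g x := by
  obtain rfl := eq_expAvg hm0 hm
  obtain rfl := eq_expAvg (f := fun j ↦ g j ^ 2) hv0 hv
  have hvhat_eq : vhat = partialSups (expAvg β₂ fun j ↦ g j ^ 2) := by
    funext k
    induction k with
    | zero => rw [partialSups_zero, hvhat0, expAvg]
    | succ k ih => rw [hvhat, ih, partialSups_add_one]
  refine ⟨hx0 ▸ hx1, fun k ↦ ?_⟩
  rcases k.eq_zero_or_pos with rfl | hk
  · simp [amsgradDirection, expAvg, hx0, hx1.1, hx1.2]
  · rw [hupd k hk, hvhat_eq, amsgradDirection, amsgradScale]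

variable (hx : IsAMSGradTrajectory β₁ β₂ α a b g x)
include hx

lemma mem (k : ℕ) : x k ∈ Set.Icc a b := by
  cases k with
  | zero => exact hx.zero_mem
  | succ k =>
    rw [hx.succ]
    exact ⟨le_min (le_max_right _ _) (hx.zero_mem.1.trans hx.zero_mem.2), min_le_right _ _⟩

lemma one_eq : x 1 = x 0 := by
  rw [hx.succ, amsgradDirection, expAvg, zero_div, mul_zero, sub_zero,
    max_eq_left hx.zero_mem.1, min_eq_left hx.zero_mem.2]

lemma abs_succ_sub_le (hz : z ∈ Set.Icc a b) (k : ℕ) :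
    |x (k + 1) - z| ≤ |x k - α k * amsgradDirection β₁ β₂ g k - z| := by
  rw [hx.succ]
  exact abs_min_max_sub_le hz

lemma abs_succ_sub_self_le (k : ℕ) :
    |x (k + 1) - x k| ≤ |α k * amsgradDirection β₁ β₂ g k| := by
  simpa using hx.abs_succ_sub_le (hx.mem k) k

lemma sq_succ_sub_self_le (hβ₁ : β₁ ∈ Set.Ico 0 1) (hβ₂ : β₂ ∈ Set.Ico 0 1) (k : ℕ) :
    (x (k + 1) - x k) ^ 2 ≤
      α k ^ 2 / (1 - β₂) * expAvg β₁ (fun j ↦ if g j ≠ 0 then 1 else 0) k := by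
  calc (x (k + 1) - x k) ^ 2 ≤ (α k * amsgradDirection β₁ β₂ g k) ^ 2 :=
        sq_le_sq.2 (hx.abs_succ_sub_self_le k)
    _ = α k ^ 2 * amsgradDirection β₁ β₂ g k ^ 2 := mul_pow ..
    _ ≤ α k ^ 2 * (expAvg β₁ (fun j ↦ if g j ≠ 0 then 1 else 0) k / (1 - β₂)) :=
        mul_le_mul_of_nonneg_left (sq_amsgradDirection_le hβ₁ hβ₂ g k) (sq_nonneg _)
    _ = _ := by ring

lemma amsgradScale_mul_sq_succ_sub_le (hβ₁ : β₁ ∈ Set.Ico 0 1) (hβ₂ : β₂ ∈ Set.Ico 0 1)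
    (hz : z ∈ Set.Icc a b) (k : ℕ) :
    amsgradScale β₂ g k * (x (k + 1) - z) ^ 2 ≤
      amsgradScale β₂ g k * (x k - z) ^ 2 - 2 * α k * expAvg β₁ g k * (x k - z) +
        α k ^ 2 * (|expAvg β₁ g k| * (1 / √(1 - β₂))) := by
  set s := amsgradScale β₂ g k
  set q := amsgradDirection β₁ β₂ g k
  have hsq : s * q = expAvg β₁ g k := amsgradScale_mul_amsgradDirection hβ₁ hβ₂ g k
  have hmq : expAvg β₁ g k * q ≤ |expAvg β₁ g k| * (1 / √(1 - β₂)) :=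
    (le_abs_self _).trans <| (abs_mul _ _).trans_le <|
      mul_le_mul_of_nonneg_left (abs_amsgradDirection_le hβ₁ hβ₂ g k) (abs_nonneg _)
  calc s * (x (k + 1) - z) ^ 2 ≤ s * (x k - α k * q - z) ^ 2 :=
        mul_le_mul_of_nonneg_left (sq_le_sq.2 (hx.abs_succ_sub_le hz k))
          (amsgradScale_nonneg β₂ g k)
    _ = s * (x k - z) ^ 2 - 2 * α k * (s * q) * (x k - z) + α k ^ 2 * (s * q * q) := by ring
    _ ≤ _ := by rw [hsq]; gcongr

lemma expAvg_mul_self_sub_succ_le (hβ₁ : β₁ ∈ Set.Ico 0 1) (hβ₂ : β₂ ∈ Set.Ico 0 1)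
    (k : ℕ) (hα : 0 ≤ α k) :
    expAvg β₁ g k * (x k - x (k + 1)) ≤ α k * (|expAvg β₁ g k| * (1 / √(1 - β₂))) := by
  calc expAvg β₁ g k * (x k - x (k + 1)) ≤ |expAvg β₁ g k| * |x (k + 1) - x k| := by
        rw [abs_sub_comm, ← abs_mul]; exact le_abs_self _
    _ ≤ |expAvg β₁ g k| * (α k * (1 / √(1 - β₂))) := by
        refine mul_le_mul_of_nonneg_left ((hx.abs_succ_sub_self_le k).trans ?_) (abs_nonneg _)
        rw [abs_mul, abs_of_nonneg hα]
        exact mul_le_mul_of_nonneg_left (abs_amsgradDirection_le hβ₁ hβ₂ g k) hα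
    _ = _ := by ring

lemma le_regretPotential_sub (hβ₁ : β₁ ∈ Set.Ico 0 1) (hβ₂ : β₂ ∈ Set.Ico 0 1) {K : ℕ}
    (hα₀ : ∀ j, 0 ≤ α j) (hα : AntitoneOn α (Set.Icc 1 K)) {D : ℝ} (hD : b - a ≤ D)
    (hz : z ∈ Set.Icc a b) (hk : k + 1 ≤ K) :
    2 * (1 - β₁) * (discountedSum β₁ α K (k + 1) * (g (k + 1) * (x (k + 1) - z))) -
        1 / ((1 - β₁) ^ 2 * √(1 - β₂)) * (α (k + 1) ^ 2 * |expAvg β₁ g (k + 1)|) ≤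
      regretPotential β₁ β₂ α K D z g x k - regretPotential β₁ β₂ α K D z g x (k + 1) := by
  have hβ₁' : 0 < 1 - β₁ := sub_pos.2 hβ₁.2
  set y := x (k + 1)
  set A := α (k + 1)
  set μ := expAvg β₁ g (k + 1)
  set w := discountedSum β₁ α K (k + 2)
  set t := |μ| * (1 / √(1 - β₂)) with ht
  have ht₀ : 0 ≤ t := by positivity
  have hstep := hx.amsgradScale_mul_sq_succ_sub_le hβ₁ hβ₂ hz (k + 1)
  have hscale : (amsgradScale β₂ g (k + 1) - amsgradScale β₂ g k) * ((y - z) ^ 2 - D ^ 2) ≤ 0 := by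
    refine mul_nonpos_of_nonneg_of_nonpos
      (sub_nonneg.2 (amsgradScale_mono β₂ g k.le_succ)) (sub_nonpos.2 (sq_le_sq.2 ?_))
    exact (Real.dist_le_of_mem_Icc (hx.mem _) hz).trans (hD.trans (le_abs_self D))
  have hw : w ≤ A / (1 - β₁) := discountedSum_le hβ₁ (hα₀ _) fun j hj ↦
    hα ⟨by lia, hk⟩ ⟨by grind, by grind⟩ (by grind)
  have hmomentum : w * (μ * (y - x (k + 2))) ≤ A ^ 2 * t / (1 - β₁) := calc
    w * (μ * (y - x (k + 2))) ≤ w * (A * t) := mul_le_mul_of_nonneg_left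
      (hx.expAvg_mul_self_sub_succ_le hβ₁ hβ₂ _ (hα₀ _)) (discountedSum_nonneg hβ₁.1 hα₀)
    _ ≤ A / (1 - β₁) * (A * t) := mul_le_mul_of_nonneg_right hw (mul_nonneg (hα₀ _) ht₀)
    _ = A ^ 2 * t / (1 - β₁) := by ring
  have hcoeff : A ^ 2 * t + 2 * β₁ * (A ^ 2 * t / (1 - β₁)) ≤ A ^ 2 * t / (1 - β₁) ^ 2 := by
    rw [← sub_nonneg, show A ^ 2 * t / (1 - β₁) ^ 2 - (A ^ 2 * t + 2 * β₁ * (A ^ 2 * t / (1 - β₁)))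
      = A ^ 2 * t * (β₁ / (1 - β₁)) ^ 2 by field_simp; ring]
    positivity
  have hparts := one_sub_mul_discountedSum_mul (β := β₁) (α := α) g hk
  have hfactor : 1 / ((1 - β₁) ^ 2 * √(1 - β₂)) * (A ^ 2 * |μ|) = A ^ 2 * t / (1 - β₁) ^ 2 := by
    rw [ht, one_div_mul_eq_div, mul_one_div, ← mul_div_assoc, div_div, mul_comm (√_)]
  simp only [regretPotential]
  rw [hfactor]
  have hβw := mul_le_mul_of_nonneg_left hmomentum (mul_nonneg zero_le_two hβ₁.1)
  linear_combination 2 * (y - z) * hparts + hstep + hscale + hβw + hcoeff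

lemma sum_discountedSum_mul_le (hβ₁ : β₁ ∈ Set.Ico 0 1) (hβ₂ : β₂ ∈ Set.Ico 0 1) {K : ℕ}
    (hα₀ : ∀ j, 0 ≤ α j) (hα : AntitoneOn α (Set.Icc 1 K)) {D : ℝ} (hD : b - a ≤ D)
    (hz : z ∈ Set.Icc a b) :
    2 * (1 - β₁) * ∑ k ∈ Icc 1 K, discountedSum β₁ α K k * (g k * (x k - z)) ≤
      D ^ 2 * amsgradScale β₂ g K +
        1 / ((1 - β₁) ^ 2 * √(1 - β₂)) * ∑ k ∈ Icc 1 K, α k ^ 2 * |expAvg β₁ g k| := by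
  have htelescope := sum_Icc_le_sub_of_le_sub (Φ := regretPotential β₁ β₂ α K D z g x)
    (f := fun k ↦ 2 * (1 - β₁) * (discountedSum β₁ α K k * (g k * (x k - z))) -
      1 / ((1 - β₁) ^ 2 * √(1 - β₂)) * (α k ^ 2 * |expAvg β₁ g k|))
    fun k hk ↦ hx.le_regretPotential_sub hβ₁ hβ₂ hα₀ hα hD hz hk
  have hstart : regretPotential β₁ β₂ α K D z g x 0 = 0 := by
    simp [regretPotential, amsgradScale_zero, expAvg]
  have hend : -(D ^ 2 * amsgradScale β₂ g K) ≤ regretPotential β₁ β₂ α K D z g x K := by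
    rw [regretPotential, discountedSum_eq_zero K.lt_succ_self]
    linear_combination mul_nonneg (amsgradScale_nonneg β₂ g K) (sq_nonneg (x (K + 1) - z))
  rw [sum_sub_distrib, ← mul_sum, ← mul_sum] at htelescope
  linarith

end IsAMSGradTrajectory

lemma sum_discountedSum_mul_sum_le {ι : Type*} [Fintype ι] {α : ℕ → ℝ} {a b z : ι → ℝ}
    {g x : ι → ℕ → ℝ} (hx : ∀ i, IsAMSGradTrajectory β₁ β₂ α (a i) (b i) (g i) (x i))
    (hβ₁ : β₁ ∈ Set.Ico 0 1) (hβ₂ : β₂ ∈ Set.Ico 0 1) {K : ℕ}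
    (hα₀ : ∀ j, 0 ≤ α j) (hα : AntitoneOn α (Set.Icc 1 K)) {D : ℝ} (hD : ∀ i, b i - a i ≤ D)
    {G : ℝ} (hG₀ : 0 ≤ G) (hG : ∀ i j, 1 ≤ j → |g i j| ≤ G) (hz : ∀ i, z i ∈ Set.Icc (a i) (b i)) :
    2 * (1 - β₁) * ∑ k ∈ Icc 1 K, discountedSum β₁ α K k * ∑ i, g i k * (x i k - z i) ≤
      Fintype.card ι * D ^ 2 * G + 1 / ((1 - β₁) ^ 2 * √(1 - β₂)) *
        ∑ k ∈ Icc 1 K, α k ^ 2 * ∑ i, |expAvg β₁ (g i) k| := by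
  calc _ = ∑ i, 2 * (1 - β₁) *
          ∑ k ∈ Icc 1 K, discountedSum β₁ α K k * (g i k * (x i k - z i)) := by
        simp only [mul_sum]; exact sum_comm
    _ ≤ ∑ i, (D ^ 2 * G + 1 / ((1 - β₁) ^ 2 * √(1 - β₂)) *
          ∑ k ∈ Icc 1 K, α k ^ 2 * |expAvg β₁ (g i) k|) := by
        refine sum_le_sum fun i _ ↦
          ((hx i).sum_discountedSum_mul_le hβ₁ hβ₂ hα₀ hα (hD i) (hz i)).trans ?_
        gcongr
        exact amsgradScale_le hβ₂ hG₀ (hG i) K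
    _ = _ := by
        simp only [sum_add_distrib, mul_sum, sum_const, card_univ, nsmul_eq_mul, mul_assoc]
        rw [sum_comm]

end AMSGrad

section Gradient

variable {E : Type*} [NormedAddCommGroup E] [InnerProductSpace ℝ E] [CompleteSpace E]
  {F : E → ℝ} {gradF : E → E} {L : ℝ}

lemma hasDerivAt_comp_add_smul {f' q d : E} {t : ℝ} (hF : HasGradientAt F f' (q + t • d)) :
    HasDerivAt (fun t : ℝ ↦ F (q + t • d)) (inner ℝ f' d) t := by
  have hline : HasDerivAt (fun t : ℝ ↦ q + t • d) d t := by
    simpa using ((hasDerivAt_id t).smul_const d).const_add q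
  simpa [Function.comp_def] using hF.hasFDerivAt.comp_hasDerivAt t hline

lemma add_inner_gradient_le {s : Set E} (hF : ConvexOn ℝ s F) {f' q z : E} (hq : q ∈ s)
    (hz : z ∈ s) (hgrad : HasGradientAt F f' q) : F q + inner ℝ f' (z - q) ≤ F z := by
  have hline : F ∘ AffineMap.lineMap q z = fun t : ℝ ↦ F (q + t • (z - q)) := by
    ext t
    simp [AffineMap.lineMap_apply, add_comm]
  have hconvex := hF.comp_affineMap (AffineMap.lineMap q z : ℝ →ᵃ[ℝ] E)
  rw [hline] at hconvex
  have hslope := hconvex.le_slope_of_hasDerivAt (x := 0) (y := 1) (by simpa using hq)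
    (by simpa using hz) zero_lt_one (hasDerivAt_comp_add_smul (by simpa using hgrad))
  simp only [slope_def_field, one_smul, zero_smul, add_zero, add_sub_cancel, sub_zero,
    div_one] at hslope
  linarith

lemma le_add_inner_gradient_add_sq (hgrad : ∀ p, HasGradientAt F (gradF p) p)
    (hL : ∀ p q, ‖gradF p - gradF q‖ ≤ L * ‖p - q‖) (p q : E) :
    F p ≤ F q + inner ℝ (gradF q) (p - q) + L / 2 * ‖p - q‖ ^ 2 := by
  set d := p - q with hd
  have hder : ∀ t : ℝ, HasDerivAt (fun t : ℝ ↦ F (q + t • d)) (inner ℝ (gradF (q + t • d)) d) t :=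
    fun t ↦ hasDerivAt_comp_add_smul (hgrad _)
  have hquadratic : ∀ t : ℝ,
      HasDerivAt (fun t ↦ F q + t * inner ℝ (gradF q) d + t ^ 2 * (L / 2 * ‖d‖ ^ 2))
        (inner ℝ (gradF q) d + t * (L * ‖d‖ ^ 2)) t := fun t ↦ by
    refine ((((hasDerivAt_id t).mul_const _).const_add _).add
      ((hasDerivAt_pow 2 t).mul_const _)).congr_deriv ?_
    push_cast
    ring
  have hslope : ∀ t ∈ Set.Ico (0 : ℝ) 1,
      inner ℝ (gradF (q + t • d)) d ≤ inner ℝ (gradF q) d + t * (L * ‖d‖ ^ 2) := fun t ht ↦ by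
    rw [← sub_le_iff_le_add', ← inner_sub_left]
    calc inner ℝ (gradF (q + t • d) - gradF q) d
        ≤ ‖gradF (q + t • d) - gradF q‖ * ‖d‖ := real_inner_le_norm _ _
      _ ≤ L * ‖q + t • d - q‖ * ‖d‖ := mul_le_mul_of_nonneg_right (hL _ _) (norm_nonneg _)
      _ = t * (L * ‖d‖ ^ 2) := by
        rw [add_sub_cancel_left, norm_smul, Real.norm_of_nonneg ht.1]; ring
  have hone := image_le_of_deriv_right_le_deriv_boundary
    (fun t _ ↦ (hder t).continuousAt.continuousWithinAt)
    (fun t _ ↦ (hder t).hasDerivWithinAt) (by simp)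
    (fun t _ ↦ (hquadratic t).continuousAt.continuousWithinAt)
    (fun t _ ↦ (hquadratic t).hasDerivWithinAt) hslope (Set.right_mem_Icc.2 zero_le_one)
  simpa [hd] using hone

lemma sub_le_inner_gradient_add_sq (hF : ConvexOn ℝ Set.univ F)
    (hgrad : ∀ p, HasGradientAt F (gradF p) p)
    (hL : ∀ p q, ‖gradF p - gradF q‖ ≤ L * ‖p - q‖) (p q z : E) :
    F p - F z ≤ inner ℝ (gradF q) (p - z) + L / 2 * ‖p - q‖ ^ 2 := by
  have hupper := le_add_inner_gradient_add_sq hgrad hL p q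
  have hlower := add_inner_gradient_le hF (Set.mem_univ q) (Set.mem_univ z) (hgrad q)
  rw [← sub_sub_sub_cancel_right p z q, inner_sub_right]
  linarith

end Gradient

section StaleRead

variable {ι : Type*} [DecidableEq ι]

/-- `y` is a stale, possibly inconsistent read of the `k`-th iterate: each of the last `τk ≤ τ`
updates may be missing in an arbitrary set `A l` of coordinates. Truncated subtraction makes the
updates before time `0` void. -/
def IsStaleRead (τ : ℕ) (x : ℕ → EuclideanSpace ℝ ι) (k : ℕ) (y : EuclideanSpace ℝ ι) : Prop :=
  ∃ τk ≤ τ, ∃ A : ℕ → Finset ι, ∀ i, y i = x k i -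
    ∑ l ∈ range τk, (x (k - l) i - x (k - l - 1) i) * if i ∈ A l then 1 else 0

lemma sq_sum_mul_ite_le (d : ℕ → ℝ) (p : ℕ → Prop) [DecidablePred p] {t τ : ℕ} (ht : t ≤ τ) :
    (∑ l ∈ range t, d l * if p l then 1 else 0) ^ 2 ≤ τ * ∑ l ∈ range τ, d l ^ 2 := by
  have hsubset : {l ∈ range t | p l} ⊆ range τ := (filter_subset _ _).trans (range_mono ht)
  have hcard : (#{l ∈ range t | p l} : ℝ) ≤ τ := by
    exact_mod_cast (card_le_card hsubset).trans_eq (card_range τ)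
  simp only [mul_ite, mul_one, mul_zero, ← sum_filter]
  refine sq_sum_le_card_mul_sum_sq.trans (mul_le_mul hcard ?_ ?_ τ.cast_nonneg)
  · exact sum_le_sum_of_subset_of_nonneg hsubset fun _ _ _ ↦ sq_nonneg _
  · exact sum_nonneg fun _ _ ↦ sq_nonneg _

lemma norm_sub_sq_le_of_isStaleRead [Fintype ι] {τ k : ℕ} {x : ℕ → EuclideanSpace ℝ ι}
    {y : EuclideanSpace ℝ ι} (h : IsStaleRead τ x k y) :
    ‖x k - y‖ ^ 2 ≤ τ * ∑ l ∈ range τ, ‖x (k - l) - x (k - l - 1)‖ ^ 2 := by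
  obtain ⟨t, ht, A, hy⟩ := h
  simp only [EuclideanSpace.real_norm_sq_eq, PiLp.sub_apply, hy, sub_sub_cancel]
  rw [sum_comm, mul_sum]
  exact sum_le_sum fun i _ ↦ sq_sum_mul_ite_le _ (fun l ↦ i ∈ A l) ht

end StaleRead

section Integration

variable {Ω : Type*} {m mΩ : MeasurableSpace Ω} {P : Measure Ω}

lemma integrable_mul_comp_of_mem_isCompact {E : Type*} [TopologicalSpace E] {S : Set E}
    {f : E → ℝ} {g : Ω → ℝ} {x : Ω → E} (hS : IsCompact S) (hf : Continuous f)
    (hx : AEStronglyMeasurable x P) (hxS : ∀ ω, x ω ∈ S) (hg : Integrable g P) :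
    Integrable (fun ω ↦ g ω * f (x ω)) P := by
  obtain ⟨C, hC⟩ := hS.exists_bound_of_continuousOn hf.continuousOn
  exact hg.mul_bdd (hf.comp_aestronglyMeasurable hx) (ae_of_all _ fun ω ↦ hC _ (hxS ω))

lemma integrable_comp_of_mem_isCompact [IsFiniteMeasure P] {E : Type*} [TopologicalSpace E]
    {S : Set E} {f : E → ℝ} {x : Ω → E} (hS : IsCompact S) (hf : Continuous f)
    (hx : AEStronglyMeasurable x P) (hxS : ∀ ω, x ω ∈ S) : Integrable (fun ω ↦ f (x ω)) P := by
  simpa only [one_mul] using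
    integrable_mul_comp_of_mem_isCompact hS hf hx hxS (integrable_const (1 : ℝ))

lemma isCompact_setOf_forall_mem_Icc {ι : Type*} (a b : ι → ℝ) :
    IsCompact {p : EuclideanSpace ℝ ι | ∀ i, p i ∈ Set.Icc (a i) (b i)} := by
  have hpreimage : {p : EuclideanSpace ℝ ι | ∀ i, p i ∈ Set.Icc (a i) (b i)} =
      PiLp.homeomorph 2 (fun _ : ι ↦ ℝ) ⁻¹' Set.Icc a b := by
    ext p
    exact forall_and
  rw [hpreimage]
  exact (PiLp.homeomorph 2 _).isCompact_preimage.2 isCompact_Icc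

lemma condExp_sum_mul_ae_eq {ι : Type*} (s : Finset ι) {f f' y : ι → Ω → ℝ}
    (hf : ∀ i ∈ s, Integrable (f i) P) (hy : ∀ i ∈ s, StronglyMeasurable[m] (y i))
    (hfy : ∀ i ∈ s, Integrable (fun ω ↦ f i ω * y i ω) P)
    (hf' : ∀ i ∈ s, P[f i | m] =ᵐ[P] f' i) :
    P[fun ω ↦ ∑ i ∈ s, f i ω * y i ω | m] =ᵐ[P] fun ω ↦ ∑ i ∈ s, f' i ω * y i ω := by
  have hpull : ∀ i ∈ s, P[fun ω ↦ f i ω * y i ω | m] =ᵐ[P] fun ω ↦ f' i ω * y i ω := fun i hi ↦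
    (condExp_mul_of_stronglyMeasurable_right (hy i hi) (hfy i hi) (hf i hi)).trans
      ((hf' i hi).mul .rfl)
  simp only [← Finset.sum_fn]
  exact (condExp_finsetSum hfy m).trans (eventuallyEq_sum hpull)

end Integration

section Stochastic

variable {ι Ω : Type*} [Fintype ι] {m mΩ : MeasurableSpace Ω} {P : Measure Ω}
  {β₁ β₂ : ℝ} {α : ℕ → ℝ} {a b : ι → ℝ} {g x : ℕ → Ω → EuclideanSpace ℝ ι}

lemma integral_norm_succ_sub_sq_le [IsFiniteMeasure P] (hβ₁ : β₁ ∈ Set.Ico 0 1)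
    (hβ₂ : β₂ ∈ Set.Ico 0 1)
    (hx : ∀ ω i, IsAMSGradTrajectory β₁ β₂ α (a i) (b i) (fun k ↦ g k ω i) fun k ↦ x k ω i)
    (hg : ∀ k, Measurable (g k)) {s : ℝ}
    (hs : ∀ k, 1 ≤ k → ∫ ω, (#{i | g k ω i ≠ 0} : ℝ) ∂P ≤ s) (k : ℕ) :
    ∫ ω, ‖x (k + 1) ω - x k ω‖ ^ 2 ∂P ≤ α k ^ 2 * (s / (1 - β₂)) := by
  have hβ₂' : 0 ≤ 1 - β₂ := sub_nonneg.2 hβ₂.2.le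
  have hs₀ : 0 ≤ s := (integral_nonneg fun _ ↦ Nat.cast_nonneg _).trans (hs 1 le_rfl)
  have hindicator : ∀ i k, 1 ≤ k → Integrable (fun ω ↦ if g k ω i ≠ 0 then (1 : ℝ) else 0) P := by
    refine fun i k _ ↦ .of_bound (C := 1)
      (Measurable.ite ?_ measurable_const measurable_const).aestronglyMeasurable
      (ae_of_all _ fun ω ↦ by split_ifs <;> simp)
    exact (show Measurable fun ω ↦ g k ω i by fun_prop) (measurableSet_singleton 0).compl
  have hsparse := integral_sum_expAvg_le hβ₁.1 hβ₁.2.le univ (fun i _ ↦ hindicator i) hs₀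
    (fun k hk ↦ by simpa only [sum_boole] using hs k hk) k
  calc ∫ ω, ‖x (k + 1) ω - x k ω‖ ^ 2 ∂P
      ≤ ∫ ω, α k ^ 2 / (1 - β₂) *
          ∑ i, expAvg β₁ (fun j ↦ if g j ω i ≠ 0 then 1 else 0) k ∂P := by
        refine integral_mono_of_nonneg (ae_of_all _ fun ω ↦ sq_nonneg _)
          ((integrable_finsetSum _ fun i _ ↦ integrable_expAvg β₁ (hindicator i) k).const_mul _)
          (ae_of_all _ fun ω ↦ ?_)
        simp only [EuclideanSpace.real_norm_sq_eq, mul_sum]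
        exact sum_le_sum fun i _ ↦ (hx ω i).sq_succ_sub_self_le hβ₁ hβ₂ k
    _ ≤ α k ^ 2 / (1 - β₂) * s := by
        rw [integral_const_mul]
        gcongr
    _ = α k ^ 2 * (s / (1 - β₂)) := by ring

lemma integral_comp_sub_le [IsProbabilityMeasure P] (hm : m ≤ mΩ) {F : EuclideanSpace ℝ ι → ℝ}
    (hF : ConvexOn ℝ Set.univ F) {gradF : EuclideanSpace ℝ ι → EuclideanSpace ℝ ι}
    (hgrad : ∀ p, HasGradientAt F (gradF p) p) {L : ℝ} (hL₀ : 0 ≤ L)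
    (hL : ∀ p q, ‖gradF p - gradF q‖ ≤ L * ‖p - q‖) {S : Set (EuclideanSpace ℝ ι)}
    (hS : IsCompact S) {x y γ : Ω → EuclideanSpace ℝ ι} (hxS : ∀ ω, x ω ∈ S)
    (hx : Measurable[m] x) (hγ : ∀ i, Integrable (fun ω ↦ γ ω i) P) {δ : Ω → ℝ}
    (hδ : Integrable δ P) (hxy : ∀ᵐ ω ∂P, ‖x ω - y ω‖ ^ 2 ≤ δ ω)
    (hcond : ∀ i, P[fun ω ↦ γ ω i | m] =ᵐ[P] fun ω ↦ gradF (y ω) i) (z : EuclideanSpace ℝ ι) :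
    (∫ ω, F (x ω) ∂P) - F z ≤
      (∫ ω, ∑ i, γ ω i * (x ω i - z i) ∂P) + L / 2 * ∫ ω, δ ω ∂P := by
  have hx' : AEStronglyMeasurable x P := (hx.mono hm le_rfl).aestronglyMeasurable
  have hcondSum : P[fun ω ↦ ∑ i, γ ω i * (x ω i - z i) | m] =ᵐ[P]
      fun ω ↦ ∑ i, gradF (y ω) i * (x ω i - z i) :=
    condExp_sum_mul_ae_eq univ (fun i _ ↦ hγ i)
      (fun i _ ↦ (show Measurable[m] fun ω ↦ x ω i - z i by fun_prop).stronglyMeasurable)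
      (fun i _ ↦ integrable_mul_comp_of_mem_isCompact hS (f := fun p ↦ p i - z i) (by fun_prop)
        hx' hxS (hγ i)) fun i _ ↦ hcond i
  have hgradInt : Integrable (fun ω ↦ ∑ i, gradF (y ω) i * (x ω i - z i)) P :=
    integrable_condExp.congr hcondSum
  have hFint : Integrable (fun ω ↦ F (x ω)) P := integrable_comp_of_mem_isCompact hS
    (continuous_iff_continuousAt.2 fun p ↦ (hgrad p).continuousAt) hx' hxS
  have hpathwise : ∀ᵐ ω ∂P, F (x ω) - F z ≤
      ∑ i, gradF (y ω) i * (x ω i - z i) + L / 2 * δ ω := by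
    filter_upwards [hxy] with ω hω
    have hinner : inner ℝ (gradF (y ω)) (x ω - z) = ∑ i, gradF (y ω) i * (x ω i - z i) := by
      simp [PiLp.inner_apply, mul_comm]
    refine (sub_le_inner_gradient_add_sq hF hgrad hL (x ω) (y ω) z).trans ?_
    rw [hinner]
    gcongr
  calc (∫ ω, F (x ω) ∂P) - F z = ∫ ω, (F (x ω) - F z) ∂P := by
        rw [integral_sub hFint (integrable_const _), integral_const, probReal_univ, one_smul]
    _ ≤ ∫ ω, (∑ i, gradF (y ω) i * (x ω i - z i) + L / 2 * δ ω) ∂P :=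
        integral_mono_ae (hFint.sub (integrable_const _)) (hgradInt.add (hδ.const_mul _)) hpathwise
    _ = _ := by
        rw [integral_add hgradInt (hδ.const_mul _), ← integral_congr_ae hcondSum,
          integral_condExp hm, integral_const_mul]

lemma integrable_norm_sub_sq [IsFiniteMeasure P]
    (hx : ∀ ω i, IsAMSGradTrajectory β₁ β₂ α (a i) (b i) (fun k ↦ g k ω i) fun k ↦ x k ω i)
    (hxmeas : ∀ k, Measurable (x k)) (j k : ℕ) :
    Integrable (fun ω ↦ ‖x j ω - x k ω‖ ^ 2) P := by
  have hbox := isCompact_setOf_forall_mem_Icc a b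
  exact integrable_comp_of_mem_isCompact (hbox.prod hbox)
    (f := fun p : EuclideanSpace ℝ ι × EuclideanSpace ℝ ι ↦ ‖p.1 - p.2‖ ^ 2) (by fun_prop)
    (x := fun ω ↦ (x j ω, x k ω)) ((hxmeas j).prodMk (hxmeas k)).aestronglyMeasurable
    fun ω ↦ ⟨fun i ↦ (hx ω i).mem j, fun i ↦ (hx ω i).mem k⟩

lemma sum_discountedSum_mul_integral_norm_sub_sq_le [IsFiniteMeasure P]
    (hβ₁ : β₁ ∈ Set.Ico 0 1) (hβ₂ : β₂ ∈ Set.Ico 0 1) {K : ℕ} (hα₀ : ∀ k, 0 ≤ α k)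
    (hα : AntitoneOn α (Set.Icc 1 K))
    (hx : ∀ ω i, IsAMSGradTrajectory β₁ β₂ α (a i) (b i) (fun k ↦ g k ω i) fun k ↦ x k ω i)
    (hxmeas : ∀ k, Measurable (x k)) (hg : ∀ k, Measurable (g k)) {s : ℝ}
    (hs : ∀ k, 1 ≤ k → ∫ ω, (#{i | g k ω i ≠ 0} : ℝ) ∂P ≤ s) (τ : ℕ) :
    ∑ k ∈ Icc 1 K, discountedSum β₁ α K k *
        ∫ ω, τ * ∑ l ∈ range τ, ‖x (k - l) ω - x (k - l - 1) ω‖ ^ 2 ∂P ≤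
      τ ^ 2 * (s / (1 - β₂) / (1 - β₁) * ∑ k ∈ Icc 1 K, α k ^ 3) := by
  have hs₀ : 0 ≤ s := (integral_nonneg fun _ ↦ Nat.cast_nonneg _).trans (hs 1 le_rfl)
  have hinit : ∀ k ≤ 1, ∫ ω, ‖x k ω - x (k - 1) ω‖ ^ 2 ∂P ≤ 0 := fun k hk ↦ by
    refine (integral_eq_zero_of_ae (ae_of_all _ fun ω ↦ ?_)).le
    have heq : x k ω = x (k - 1) ω := by
      ext i
      interval_cases k
      exacts [rfl, (hx ω i).one_eq]
    simp [heq]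
  calc _ = τ * ∑ l ∈ range τ, ∑ k ∈ Icc 1 K, discountedSum β₁ α K k *
          ∫ ω, ‖x (k - l) ω - x (k - l - 1) ω‖ ^ 2 ∂P := by
        simp only [integral_const_mul,
          integral_finsetSum _ fun _ _ ↦ integrable_norm_sub_sq hx hxmeas _ _]
        rw [sum_comm, mul_sum]
        simp only [mul_sum, mul_left_comm]
    _ ≤ τ * ∑ _l ∈ range τ, s / (1 - β₂) / (1 - β₁) * ∑ k ∈ Icc 1 K, α k ^ 3 := by
        gcongr with l
        exact sum_discountedSum_mul_sub_le hβ₁ hα₀ hα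
          (d := fun k ↦ ∫ ω, ‖x k ω - x (k - 1) ω‖ ^ 2 ∂P)
          (div_nonneg hs₀ (sub_nonneg.2 hβ₂.2.le)) hinit
          (integral_norm_succ_sub_sq_le hβ₁ hβ₂ hx hg hs) l
    _ = _ := by
        rw [sum_const, card_range, nsmul_eq_mul]; ring

lemma sum_discountedSum_mul_integral_le [IsProbabilityMeasure P] (hβ₁ : β₁ ∈ Set.Ico 0 1)
    (hβ₂ : β₂ ∈ Set.Ico 0 1) {K : ℕ} (hα₀ : ∀ k, 0 ≤ α k) (hα : AntitoneOn α (Set.Icc 1 K))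
    (hx : ∀ ω i, IsAMSGradTrajectory β₁ β₂ α (a i) (b i) (fun k ↦ g k ω i) fun k ↦ x k ω i)
    (hxmeas : ∀ k, Measurable (x k)) (hg : ∀ i k, 1 ≤ k → Integrable (fun ω ↦ g k ω i) P) {D : ℝ}
    (hD : ∀ i, b i - a i ≤ D) {G : ℝ} (hG₀ : 0 ≤ G)
    (hG : ∀ k, 1 ≤ k → ∀ᵐ ω ∂P, ∀ i, |g k ω i| ≤ G) {G₁ : ℝ}
    (hG₁ : ∀ k, 1 ≤ k → ∫ ω, ∑ i, |g k ω i| ∂P ≤ G₁) {z : EuclideanSpace ℝ ι}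
    (hz : ∀ i, z i ∈ Set.Icc (a i) (b i)) :
    2 * (1 - β₁) * ∑ k ∈ Icc 1 K,
        discountedSum β₁ α K k * ∫ ω, ∑ i, g k ω i * (x k ω i - z i) ∂P ≤
      Fintype.card ι * D ^ 2 * G +
        (∑ k ∈ Icc 1 K, α k ^ 2) * G₁ / ((1 - β₁) ^ 2 * √(1 - β₂)) := by
  set C := 1 / ((1 - β₁) ^ 2 * √(1 - β₂)) with hC
  have hG₁₀ : 0 ≤ G₁ :=
    (integral_nonneg fun _ ↦ sum_nonneg fun _ _ ↦ abs_nonneg _).trans (hG₁ 1 le_rfl)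
  have hregretInt : ∀ k ∈ Icc 1 K,
      Integrable (fun ω ↦ discountedSum β₁ α K k * ∑ i, g k ω i * (x k ω i - z i)) P :=
    fun k hk ↦ (integrable_finsetSum _ fun i _ ↦ integrable_mul_comp_of_mem_isCompact
      (isCompact_setOf_forall_mem_Icc a b) (f := fun p ↦ p i - z i) (by fun_prop)
      (hxmeas k).aestronglyMeasurable (fun ω i ↦ (hx ω i).mem k)
      (hg i k (mem_Icc.1 hk).1)).const_mul _
  have hmomentInt : ∀ k ∈ Icc 1 K,
      Integrable (fun ω ↦ α k ^ 2 * ∑ i, |expAvg β₁ (fun j ↦ g j ω i) k|) P :=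
    fun k _ ↦ (integrable_finsetSum _ fun i _ ↦ (integrable_expAvg β₁ (hg i) k).abs).const_mul _
  have hpathwise : ∀ᵐ ω ∂P, 2 * (1 - β₁) * ∑ k ∈ Icc 1 K,
        discountedSum β₁ α K k * ∑ i, g k ω i * (x k ω i - z i) ≤
      Fintype.card ι * D ^ 2 * G +
        C * ∑ k ∈ Icc 1 K, α k ^ 2 * ∑ i, |expAvg β₁ (fun j ↦ g j ω i) k| := by
    filter_upwards [ae_all_iff.2 fun k ↦ Filter.eventually_imp_distrib_left.2 (hG k)] with ω hω
    exact sum_discountedSum_mul_sum_le (hx ω) hβ₁ hβ₂ hα₀ hα hD hG₀ (fun i k hk ↦ hω k hk i) hz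
  have hmono := integral_mono_ae ((integrable_finsetSum _ hregretInt).const_mul _)
    ((integrable_const _).add ((integrable_finsetSum _ hmomentInt).const_mul C)) hpathwise
  rw [integral_const_mul, integral_finsetSum _ hregretInt, integral_add' (integrable_const _)
    ((integrable_finsetSum _ hmomentInt).const_mul C), integral_const, probReal_univ, one_smul,
    integral_const_mul, integral_finsetSum _ hmomentInt] at hmono
  simp only [integral_const_mul] at hmono
  refine hmono.trans (add_le_add_right ?_ _)
  rw [hC, one_div_mul_eq_div, sum_mul]
  gcongr with k
  exact integral_sum_abs_expAvg_le hβ₁.1 hβ₁.2.le univ (fun i _ ↦ hg i) hG₁₀ hG₁ k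

lemma sum_discountedSum_mul_integral_comp_sub_le [DecidableEq ι] [IsProbabilityMeasure P]
    (hβ₁ : β₁ ∈ Set.Ico 0 1) (hβ₂ : β₂ ∈ Set.Ico 0 1) {ℱ : ℕ → MeasurableSpace Ω}
    (hℱ : ∀ k, ℱ k ≤ mΩ) {K : ℕ} (hα₀ : ∀ k, 0 ≤ α k) (hα : AntitoneOn α (Set.Icc 1 K))
    (hx : ∀ ω i, IsAMSGradTrajectory β₁ β₂ α (a i) (b i) (fun k ↦ g k ω i) fun k ↦ x k ω i)
    (hxmeas : ∀ k, Measurable[ℱ k] (x k)) (hg : ∀ k, Measurable (g k)) {D : ℝ}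
    (hD : ∀ i, b i - a i ≤ D) {G : ℝ} (hG₀ : 0 ≤ G)
    (hG : ∀ k, 1 ≤ k → ∀ᵐ ω ∂P, ∀ i, |g k ω i| ≤ G) {G₁ : ℝ}
    (hG₁ : ∀ k, 1 ≤ k → ∫ ω, ∑ i, |g k ω i| ∂P ≤ G₁) {s : ℝ}
    (hs : ∀ k, 1 ≤ k → ∫ ω, (#{i | g k ω i ≠ 0} : ℝ) ∂P ≤ s)
    {F : EuclideanSpace ℝ ι → ℝ} (hF : ConvexOn ℝ Set.univ F)
    {gradF : EuclideanSpace ℝ ι → EuclideanSpace ℝ ι} (hgrad : ∀ p, HasGradientAt F (gradF p) p)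
    {L : ℝ} (hL₀ : 0 ≤ L) (hL : ∀ p q, ‖gradF p - gradF q‖ ≤ L * ‖p - q‖) {τ : ℕ}
    {xhat : ℕ → Ω → EuclideanSpace ℝ ι}
    (hstale : ∀ k, 1 ≤ k → ∀ᵐ ω ∂P, IsStaleRead τ (fun j ↦ x j ω) k (xhat k ω))
    (hcond : ∀ k, 1 ≤ k → ∀ i, P[fun ω ↦ g k ω i | ℱ k] =ᵐ[P] fun ω ↦ gradF (xhat k ω) i)
    {z : EuclideanSpace ℝ ι} (hz : ∀ i, z i ∈ Set.Icc (a i) (b i)) :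
    2 * (1 - β₁) * ∑ k ∈ Icc 1 K, discountedSum β₁ α K k * ((∫ ω, F (x k ω) ∂P) - F z) ≤
      Fintype.card ι * D ^ 2 * G +
        (∑ k ∈ Icc 1 K, α k ^ 2) * G₁ / ((1 - β₁) ^ 2 * √(1 - β₂)) +
        (∑ k ∈ Icc 1 K, α k ^ 3) * L * τ ^ 2 * s / (1 - β₂) := by
  have hβ₁' : 0 < 1 - β₁ := sub_pos.2 hβ₁.2
  have hxmeas' : ∀ k, Measurable (x k) := fun k ↦ (hxmeas k).mono (hℱ k) le_rfl
  have hgint : ∀ i k, 1 ≤ k → Integrable (fun ω ↦ g k ω i) P := fun i k hk ↦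
    .of_bound (show Measurable fun ω ↦ g k ω i by fun_prop).aestronglyMeasurable G
      ((hG k hk).mono fun ω hω ↦ hω i)
  have hregret := sum_discountedSum_mul_integral_le hβ₁ hβ₂ hα₀ hα hx hxmeas' hgint hD hG₀ hG hG₁ hz
  have hdelay := sum_discountedSum_mul_integral_norm_sub_sq_le hβ₁ hβ₂ hα₀ hα hx hxmeas' hg hs τ
  have hiterate : ∀ k ∈ Icc 1 K, (∫ ω, F (x k ω) ∂P) - F z ≤
      (∫ ω, ∑ i, g k ω i * (x k ω i - z i) ∂P) +
        L / 2 * ∫ ω, τ * ∑ l ∈ range τ, ‖x (k - l) ω - x (k - l - 1) ω‖ ^ 2 ∂P := fun k hk ↦ by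
    have hk := (mem_Icc.1 hk).1
    exact integral_comp_sub_le (hℱ k) hF hgrad hL₀ hL (isCompact_setOf_forall_mem_Icc a b)
      (fun ω i ↦ (hx ω i).mem k) (hxmeas k) (fun i ↦ hgint i k hk)
      ((integrable_finsetSum _ fun _ _ ↦ integrable_norm_sub_sq hx hxmeas' _ _).const_mul _)
      ((hstale k hk).mono fun ω ↦ norm_sub_sq_le_of_isStaleRead) (hcond k hk) z
  have hweighted := sum_le_sum fun k hk ↦
    mul_le_mul_of_nonneg_left (hiterate k hk) (discountedSum_nonneg (k := k) (K := K) hβ₁.1 hα₀)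
  simp only [mul_add, sum_add_distrib, mul_left_comm _ (L / 2), ← mul_sum] at hweighted
  have hdelay_const : 2 * (1 - β₁) *
        (L / 2 * (τ ^ 2 * (s / (1 - β₂) / (1 - β₁) * ∑ k ∈ Icc 1 K, α k ^ 3))) =
      (∑ k ∈ Icc 1 K, α k ^ 3) * L * τ ^ 2 * s / (1 - β₂) := by
    field_simp
  calc _ ≤ 2 * (1 - β₁) * _ := mul_le_mul_of_nonneg_left hweighted (by positivity)
    _ ≤ _ := by
      rw [mul_add, ← hdelay_const]
      gcongr

end Stochastic

lemma regretBound_eq_of_eq_div_sqrt {K : ℕ} (hK : 0 < K) {α : ℝ}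
    {αseq : ℕ → ℝ} (hα : ∀ k ∈ Icc 1 K, αseq k = α / √K) (β₁ β₂ N G₁ L t s : ℝ) :
    1 / (2 * (1 - β₁) * ∑ k ∈ Icc 1 K, αseq k) *
        (N + (∑ k ∈ Icc 1 K, αseq k ^ 2) * G₁ / ((1 - β₁) ^ 2 * √(1 - β₂)) +
          (∑ k ∈ Icc 1 K, αseq k ^ 3) * L * t * s / (1 - β₂)) =
      1 / (2 * α * √K * (1 - β₁)) *
        (N + α ^ 2 * G₁ / ((1 - β₁) ^ 2 * √(1 - β₂)) +
          α ^ 3 * L * t * s / (√K * (1 - β₂))) := by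
  have hsum : ∀ p, ∑ k ∈ Icc 1 K, αseq k ^ p = √K ^ 2 * (α / √K) ^ p := fun p ↦ by
    simpa using sum_eq_card_nsmul fun k hk ↦ congrArg (· ^ p) (hα k hk)
  have hsum_one : ∑ k ∈ Icc 1 K, αseq k = √K ^ 2 * (α / √K) := by simpa using hsum 1
  rw [hsum_one, hsum 2, hsum 3]
  field_simp

theorem stmt3_general {ι Ω : Type*} [Fintype ι] [DecidableEq ι] [Nonempty ι]
    {mΩ : MeasurableSpace Ω} {P : Measure Ω} [IsProbabilityMeasure P]
    {β₁ β₂ : ℝ} (hβ₁ : β₁ ∈ Set.Ico 0 1) (hβ₂ : β₂ ∈ Set.Ico 0 1)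
    {ℱ : ℕ → MeasurableSpace Ω} (hℱ : ∀ k, ℱ k ≤ mΩ) {K : ℕ} (hK : 1 ≤ K)
    {α : ℕ → ℝ} (hα₀ : ∀ k, 0 < α k) (hα : AntitoneOn α (Set.Icc 1 K))
    {a b : ι → ℝ} {g x xhat : ℕ → Ω → EuclideanSpace ℝ ι}
    (hx : ∀ ω i, IsAMSGradTrajectory β₁ β₂ α (a i) (b i) (fun k ↦ g k ω i) fun k ↦ x k ω i)
    (hxmeas : ∀ k, Measurable[ℱ k] (x k)) (hg : ∀ k, Measurable (g k))
    {D G G₁ s : ℝ} (hD : ∀ i, b i - a i ≤ D)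
    (hG : ∀ k, 1 ≤ k → ∀ᵐ ω ∂P, ∀ i, |g k ω i| ≤ G)
    (hG₁ : ∀ k, 1 ≤ k → ∫ ω, ∑ i, |g k ω i| ∂P ≤ G₁)
    (hs : ∀ k, 1 ≤ k → ∫ ω, (#{i | g k ω i ≠ 0} : ℝ) ∂P ≤ s)
    {F : EuclideanSpace ℝ ι → ℝ} (hF : ConvexOn ℝ Set.univ F)
    {gradF : EuclideanSpace ℝ ι → EuclideanSpace ℝ ι} (hgrad : ∀ p, HasGradientAt F (gradF p) p)
    {L : ℝ} (hL : ∀ p q, ‖gradF p - gradF q‖ ≤ L * ‖p - q‖) {τ : ℕ}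
    (hstale : ∀ k, 1 ≤ k → ∀ᵐ ω ∂P, IsStaleRead τ (fun j ↦ x j ω) k (xhat k ω))
    (hcond : ∀ k, 1 ≤ k → ∀ i, P[fun ω ↦ g k ω i | ℱ k] =ᵐ[P] fun ω ↦ gradF (xhat k ω) i)
    {z : EuclideanSpace ℝ ι} (hz : ∀ i, z i ∈ Set.Icc (a i) (b i)) :
    (∑ k ∈ Icc 1 K, discountedSum β₁ α K k / (∑ t ∈ Icc 1 K, discountedSum β₁ α K t) *
        ∫ ω, F (x k ω) ∂P) - F z ≤
      1 / (2 * (1 - β₁) * ∑ k ∈ Icc 1 K, α k) *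
        (Fintype.card ι * D ^ 2 * G +
          (∑ k ∈ Icc 1 K, α k ^ 2) * G₁ / ((1 - β₁) ^ 2 * √(1 - β₂)) +
          (∑ k ∈ Icc 1 K, α k ^ 3) * L * τ ^ 2 * s / (1 - β₂)) := by
  have hβ₁' : 0 < 1 - β₁ := sub_pos.2 hβ₁.2
  have hβ₂' : 0 < 1 - β₂ := sub_pos.2 hβ₂.2
  have hα₀' : ∀ k, 0 ≤ α k := fun k ↦ (hα₀ k).le
  obtain ⟨i⟩ := ‹Nonempty ι›
  obtain ⟨ω, hω⟩ := (hG 1 le_rfl).exists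
  have hG₀ : 0 ≤ G := (abs_nonneg _).trans (hω i)
  have hG₁₀ : 0 ≤ G₁ :=
    (integral_nonneg fun _ ↦ sum_nonneg fun _ _ ↦ abs_nonneg _).trans (hG₁ 1 le_rfl)
  have hs₀ : 0 ≤ s := (integral_nonneg fun _ ↦ Nat.cast_nonneg _).trans (hs 1 le_rfl)
  have hL₀ : 0 ≤ L := by
    simpa using (norm_nonneg _).trans (hL (EuclideanSpace.single i 1) 0)
  have hsum : 0 < ∑ k ∈ Icc 1 K, α k := sum_pos (fun k _ ↦ hα₀ k) (nonempty_Icc.2 hK)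
  have hmain := sum_discountedSum_mul_integral_comp_sub_le hβ₁ hβ₂ hℱ hα₀' hα hx hxmeas hg hD hG₀ hG
    hG₁ hs hF hgrad hL₀ hL hstale hcond hz
  rw [← le_div_iff₀' (by positivity)] at hmain
  refine (sum_div_sum_mul_sub_le hsum ?_ ?_ hmain).trans_eq ?_
  · exact sum_le_sum fun k hk ↦ le_discountedSum hβ₁.1 hα₀' (mem_Icc.1 hk).2
  · have := sum_nonneg fun k (_ : k ∈ Icc 1 K) ↦ pow_nonneg (hα₀' k) 3
    positivity
  · rw [div_div, one_div_mul_eq_div]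

/-- convex case with delay: with `α_k = α/√K`, weights
`w_k = ∑_{j=k}^K α_j β₁^{j−k}` and probabilities `p_k = w_k/∑_t w_t`,
`∑_{k=1}^K p_k E[F(x^(k))] − F*
  ≤ (1/(2α√K(1−β₁))) (n D∞² G∞ + α² G₁/((1−β₁)²√(1−β₂)) + α³ L τ² s/(√K(1−β₂)))`. -/
theorem stmt3
    {n : ℕ} (hn : 1 ≤ n)
    (β₁ β₂ : ℝ) (hβ₁ : β₁ ∈ Set.Ico (0:ℝ) 1) (hβ₂ : β₂ ∈ Set.Ico (0:ℝ) 1)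
    {Ω : Type*} [mΩ : MeasurableSpace Ω] (P : Measure Ω) [IsProbabilityMeasure P]
    (ℱ : Filtration ℕ mΩ)
    (g m v vhat x xhat : ℕ → Ω → EuclideanSpace ℝ (Fin n))
    (hgmeas : ∀ k, Measurable (g k))
    (hxhatmeas : ∀ k, Measurable (xhat k))
    (hxmeas : ∀ k, Measurable[ℱ k] (x k))
    (hm0 : ∀ ω i, m 0 ω i = 0) (hv0 : ∀ ω i, v 0 ω i = 0) (hvhat0 : ∀ ω i, vhat 0 ω i = 0)
    (hm : ∀ k ω i, m (k+1) ω i = β₁ * m k ω i + (1 - β₁) * g (k+1) ω i)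
    (hv : ∀ k ω i, v (k+1) ω i = β₂ * v k ω i + (1 - β₂) * (g (k+1) ω i)^2)
    (hvhat : ∀ k ω i, vhat (k+1) ω i = max (vhat k ω i) (v (k+1) ω i))
    -- the box `X = [a₁,b₁]×⋯×[aₙ,bₙ]` with ℓ∞-diameter at most `D∞`
    (a b : Fin n → ℝ) (hab : ∀ i, a i ≤ b i)
    (X : Set (EuclideanSpace ℝ (Fin n)))
    (hX : X = {p : EuclideanSpace ℝ (Fin n) | ∀ i, p i ∈ Set.Icc (a i) (b i)})
    (Dinf Ginf G₁ : ℝ)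
    (hD : ∀ p ∈ X, ∀ q ∈ X, ∀ i, |p i - q i| ≤ Dinf)
    (hGinf : ∀ k, 1 ≤ k → ∀ᵐ ω ∂P, ∀ i, |g k ω i| ≤ Ginf)
    (hG1 : ∀ k, 1 ≤ k → ∫ ω, (∑ i, |g k ω i|) ∂P ≤ G₁)
    (s : ℕ) (hs1 : 1 ≤ s) (hsn : s ≤ n)
    (hg0 : ∀ k, 1 ≤ k →
      ∫ ω, ((Finset.univ.filter (fun i => g k ω i ≠ 0)).card : ℝ) ∂P ≤ s)
    (F : EuclideanSpace ℝ (Fin n) → ℝ) (hF : ConvexOn ℝ Set.univ F)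
    (gradF : EuclideanSpace ℝ (Fin n) → EuclideanSpace ℝ (Fin n))
    (hdiff : ∀ p, HasGradientAt F (gradF p) p)
    (L : ℝ) (hL : ∀ p q, ‖gradF p - gradF q‖ ≤ L * ‖p - q‖)
    (Fstar : ℝ) (hFstar : IsLeast (F '' X) Fstar)
    (K : ℕ) (hK : 1 ≤ K) (α : ℝ) (hα : 0 < α)
    (αseq : ℕ → ℝ) (hαpos : ∀ k, 0 < αseq k)
    (hαseq : ∀ k, 1 ≤ k → k ≤ K → αseq k = α / Real.sqrt K)
    -- the clamped update (with `0/0 = 0`, Lean's division convention)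
    (hx1 : ∀ ω, x 1 ω ∈ X) (hx0 : ∀ ω, x 0 ω = x 1 ω)
    (hupd : ∀ k, 1 ≤ k → ∀ ω i,
      x (k+1) ω i = min (max (x k ω i - αseq k * (m k ω i / Real.sqrt (vhat k ω i))) (a i)) (b i))
    -- bounded-staleness delay structure
    (τ : ℕ)
    (hdelay : ∀ k, 1 ≤ k → ∀ᵐ ω ∂P, ∃ τk, τk ≤ τ ∧ ∃ A : ℕ → Finset (Fin n),
      ∀ i, xhat k ω i = x k ω i -
        ∑ l ∈ Finset.range τk, (x (k - l) ω i - x (k - l - 1) ω i) *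
          (if i ∈ A l then (1:ℝ) else 0))
    (hcond : ∀ k, 1 ≤ k → ∀ i,
      P[(fun ω' => g k ω' i)|ℱ k] =ᵐ[P] (fun ω => gradF (xhat k ω) i)) :
    (∑ k ∈ Finset.Icc 1 K,
        ((∑ j ∈ Finset.Icc k K, αseq j * β₁ ^ (j - k)) /
          (∑ t ∈ Finset.Icc 1 K, ∑ j ∈ Finset.Icc t K, αseq j * β₁ ^ (j - t))) *
          (∫ ω, F (x k ω) ∂P)) - Fstar
      ≤ (1 / (2 * α * Real.sqrt K * (1 - β₁))) *
          (n * Dinf^2 * Ginf + α^2 * G₁ / ((1 - β₁)^2 * Real.sqrt (1 - β₂))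
            + α^3 * L * τ^2 * s / (Real.sqrt K * (1 - β₂))) := by
  subst hX
  obtain ⟨⟨z, hz, rfl⟩, -⟩ := hFstar
  have := Fin.pos_iff_nonempty.1 hn
  have hstep : ∀ k ∈ Icc 1 K, αseq k = α / √K := fun k hk ↦
    hαseq k (mem_Icc.1 hk).1 (mem_Icc.1 hk).2
  refine (stmt3_general (D := Dinf) hβ₁ hβ₂ ℱ.le hK hαpos ?_ (fun ω i ↦ ?_) hxmeas hgmeas
    (fun i ↦ ?_) hGinf hG1 hg0 hF hdiff hL hdelay hcond hz).trans_eq ?_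
  · exact antitoneOn_const.congr fun k hk ↦ (hstep k (mem_Icc.2 hk)).symm
  · exact .of_recursion (v := fun k ↦ v k ω i) (hm0 ω i) (hv0 ω i) (hvhat0 ω i) (hm · ω i)
      (hv · ω i) (hvhat · ω i) (hx1 ω i) (by rw [hx0]) fun k hk ↦ hupd k hk ω i
  · exact (le_abs_self _).trans <| hD (.toLp 2 b) (fun i ↦ ⟨hab i, le_rfl⟩)
      (.toLp 2 a) (fun i ↦ ⟨le_rfl, hab i⟩) i
  · rw [regretBound_eq_of_eq_div_sqrt hK hstep, Fintype.card_fin]
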